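/- Let λ ∈ (0,1) and K, κ > 0 with 2κKe ≤ 1, and set q = [ (1−λ)^{1−λ}/(1+λ)^{1+λ} ] (2κKe)^{2λ}. Then q ∈ (0,1) and there is a constant C > 0 such that for all integers p ≥ 1, with s = λ(p+1) (factorials interpreted via the Gamma function), (p+1−s)!/(p+1+s)! · ( K · 2κp )^{2s} ≤ C q^{p+1}. Consequently, if a function u on I = (0,1) satisfies |u|²_{s+1,I} ≤ C₁ K^{2s+1} M^{2s+1} with M ≤ 2κp, then (1/(2p+1)) · (p+1−s)!/(p+1+s)! · |u'|²_{s,I} ≤ C' e^{−βp} with β = |ln q|. -/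

import Mathlib

noncomputable section

open MeasureTheory Set

/-- A mesh `0 = x₀ < x₁ < ⋯ < x_N = 1` on the interval `I = (0,1)`. -/
structure Mesh (N : ℕ) where
  pt : Fin (N + 1) → ℝ
  mono : StrictMono pt
  left : pt 0 = 0
  right : pt (Fin.last N) = 1

namespace Mesh

variable {N : ℕ}

/-- The left endpoint `x_{j-1}` of the `j`-th cell `I_j`. -/
def xl (m : Mesh N) (j : Fin N) : ℝ := m.pt j.castSucc

/-- The right endpoint `x_j` of the `j`-th cell `I_j`. -/
def xr (m : Mesh N) (j : Fin N) : ℝ := m.pt j.succ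

/-- The width `h_j` of the `j`-th cell. -/
def width (m : Mesh N) (j : Fin N) : ℝ := m.xr j - m.xl j

end Mesh

/-- `f` coincides (everywhere) with a polynomial of degree at most `p`. -/
def IsPolyDeg (f : ℝ → ℝ) (p : ℕ) : Prop :=
  ∃ q : Polynomial ℝ, q.natDegree ≤ p ∧ ∀ t, f t = q.eval t

/-- `D` is the weak derivative of degree `p` of the weak function with interior part `v0`
and boundary values `vl`, `vr` on the cell `(a,b)`. -/
def IsWeakDerivOn (a b : ℝ) (p : ℕ) (v0 : ℝ → ℝ) (vl vr : ℝ) (D : ℝ → ℝ) : Prop :=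
  IsPolyDeg D p ∧ ∀ q : Polynomial ℝ, q.natDegree ≤ p →
    (∫ t in a..b, D t * q.eval t) =
      -(∫ t in a..b, v0 t * q.derivative.eval t) + vr * q.eval b - vl * q.eval a

/-- `D` is the (cellwise) weak derivative `D_p v` of the weak function `v = (v0, vb)`. -/
def IsWeakDeriv {N : ℕ} (m : Mesh N) (p : ℕ) (v0 : Fin N → ℝ → ℝ)
    (vb : Fin (N + 1) → ℝ) (D : Fin N → ℝ → ℝ) : Prop :=
  ∀ j, IsWeakDerivOn (m.xl j) (m.xr j) p (v0 j) (vb j.castSucc) (vb j.succ) (D j)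

/-- `D` is the weak convection derivative of degree `p` on the cell `(a,b)`,
with convection coefficient `bb`. -/
def IsWeakConvDerivOn (bb : ℝ → ℝ) (a b : ℝ) (p : ℕ) (v0 : ℝ → ℝ) (vl vr : ℝ)
    (D : ℝ → ℝ) : Prop :=
  IsPolyDeg D p ∧ ∀ q : Polynomial ℝ, q.natDegree ≤ p →
    (∫ t in a..b, D t * q.eval t) =
      -(∫ t in a..b, v0 t * deriv (fun s => bb s * q.eval s) t)
      + vr * (bb b * q.eval b) - vl * (bb a * q.eval a)

/-- `D` is the (cellwise) weak convection derivative `D_p^c v` of `v = (v0, vb)`. -/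
def IsWeakConvDeriv {N : ℕ} (m : Mesh N) (bb : ℝ → ℝ) (p : ℕ) (v0 : Fin N → ℝ → ℝ)
    (vb : Fin (N + 1) → ℝ) (D : Fin N → ℝ → ℝ) : Prop :=
  ∀ j, IsWeakConvDerivOn bb (m.xl j) (m.xr j) p (v0 j) (vb j.castSucc) (vb j.succ) (D j)

/-- The stabilisation bilinear form `S(u,v)`. -/
def Sform {N : ℕ} (m : Mesh N) (σ : Fin N → ℝ)
    (u0 : Fin N → ℝ → ℝ) (ub : Fin (N + 1) → ℝ)
    (v0 : Fin N → ℝ → ℝ) (vb : Fin (N + 1) → ℝ) : ℝ :=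
  ∑ j : Fin N, σ j * ((u0 j (m.xr j) - ub j.succ) * (v0 j (m.xr j) - vb j.succ)
    + (u0 j (m.xl j) - ub j.castSucc) * (v0 j (m.xl j) - vb j.castSucc))

/-- The convection stabilisation bilinear form `S_c(u,v)`. -/
def Scform {N : ℕ} (m : Mesh N) (ε₂ : ℝ) (bb : ℝ → ℝ)
    (u0 : Fin N → ℝ → ℝ) (ub : Fin (N + 1) → ℝ)
    (v0 : Fin N → ℝ → ℝ) (vb : Fin (N + 1) → ℝ) : ℝ :=
  ∑ j : Fin N, ε₂ * bb (m.xr j) * (u0 j (m.xr j) - ub j.succ) * (v0 j (m.xr j) - vb j.succ)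

/-- The squared jump seminorm `|v|_J²`. -/
def Jsemi2 {N : ℕ} (m : Mesh N) (ε₂ : ℝ) (bb : ℝ → ℝ)
    (v0 : Fin N → ℝ → ℝ) (vb : Fin (N + 1) → ℝ) : ℝ :=
  ∑ j : Fin N, (if j.succ = Fin.last N then (1 : ℝ) / 2 else 1) * ε₂ * bb (m.xr j) *
    (v0 j (m.xr j) - vb j.succ) ^ 2

/-- The squared WG energy norm `|||v|||_p²`, where `Dv` is the weak derivative `D_{p-1} v`. -/
def normP2 {N : ℕ} (m : Mesh N) (ε₁ ε₂ : ℝ) (bb : ℝ → ℝ) (σ : Fin N → ℝ)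
    (v0 : Fin N → ℝ → ℝ) (vb : Fin (N + 1) → ℝ) (Dv : Fin N → ℝ → ℝ) : ℝ :=
  ε₁ * (∑ j : Fin N, ∫ t in (m.xl j)..(m.xr j), (Dv j t) ^ 2)
    + (∑ j : Fin N, ∫ t in (m.xl j)..(m.xr j), (v0 j t) ^ 2)
    + Sform m σ v0 vb v0 vb + Scform m ε₂ bb v0 vb v0 vb + Jsemi2 m ε₂ bb v0 vb

/-- The squared WG norm `|||v|||²` (with the broken classical derivative). -/
def normT2 {N : ℕ} (m : Mesh N) (ε₁ ε₂ : ℝ) (bb : ℝ → ℝ) (σ : Fin N → ℝ)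
    (v0 : Fin N → ℝ → ℝ) (vb : Fin (N + 1) → ℝ) : ℝ :=
  ε₁ * (∑ j : Fin N, ∫ t in (m.xl j)..(m.xr j), (deriv (v0 j) t) ^ 2)
    + (∑ j : Fin N, ∫ t in (m.xl j)..(m.xr j), (v0 j t) ^ 2)
    + Sform m σ v0 vb v0 vb + Scform m ε₂ bb v0 vb v0 vb + Jsemi2 m ε₂ bb v0 vb

/-- The WG bilinear form `A_p(u,v)`; `Du = D_{p-1}u`, `Dcu = D_p^c u`, `Dv = D_{p-1}v`. -/
def Aform {N : ℕ} (m : Mesh N) (ε₁ ε₂ : ℝ) (bb rr : ℝ → ℝ) (σ : Fin N → ℝ)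
    (u0 : Fin N → ℝ → ℝ) (ub : Fin (N + 1) → ℝ) (Du Dcu : Fin N → ℝ → ℝ)
    (v0 : Fin N → ℝ → ℝ) (vb : Fin (N + 1) → ℝ) (Dv : Fin N → ℝ → ℝ) : ℝ :=
  ε₁ * (∑ j : Fin N, ∫ t in (m.xl j)..(m.xr j), Du j t * Dv j t)
    + ε₂ * (∑ j : Fin N, ∫ t in (m.xl j)..(m.xr j), Dcu j t * v0 j t)
    + (∑ j : Fin N, ∫ t in (m.xl j)..(m.xr j), rr t * u0 j t * v0 j t)
    + Sform m σ u0 ub v0 vb + Scform m ε₂ bb u0 ub v0 vb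

/-- `u` solves the two-parameter singularly perturbed boundary-value problem
`-ε₁ u'' + ε₂ b u' + r u = f` on `(0,1)`, `u(0) = u(1) = 0`. -/
def SolvesBVP (ε₁ ε₂ : ℝ) (bb rr ff u : ℝ → ℝ) : Prop :=
  u 0 = 0 ∧ u 1 = 0 ∧
    ∀ x ∈ Set.Icc (0 : ℝ) 1,
      -ε₁ * deriv (deriv u) x + ε₂ * bb x * deriv u x + rr x * u x = ff x

/-- `P` is the interpolant `I y` of `y` on the cell `(a,b)`. -/
def IsInterpOn (a b : ℝ) (p : ℕ) (y P : ℝ → ℝ) : Prop :=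
  IsPolyDeg P p ∧ P a = y a ∧ P b = y b ∧
    ∀ q : Polynomial ℝ, q.natDegree ≤ p →
      (∫ t in a..b, (deriv P t - deriv y t) * q.derivative.eval t) = 0

/-- `P` is the (cellwise) interpolant `I y` of `y` on the mesh `m`. -/
def IsInterp {N : ℕ} (m : Mesh N) (p : ℕ) (y : ℝ → ℝ) (P : Fin N → ℝ → ℝ) : Prop :=
  ∀ j, IsInterpOn (m.xl j) (m.xr j) p y (P j)

/-- Glue cellwise functions into a single function on `I` (cells taken left-closed). -/
def glue {N : ℕ} (m : Mesh N) (v0 : Fin N → ℝ → ℝ) : ℝ → ℝ :=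
  fun t => ∑ j : Fin N, Set.indicator (Set.Ico (m.xl j) (m.xr j)) (v0 j) t

/-- The standard penalty parameters `σ_j = ε₁ p² / h_j`. -/
def stdPen {N : ℕ} (m : Mesh N) (ε₁ : ℝ) (p : ℕ) : Fin N → ℝ :=
  fun j => ε₁ * (p : ℝ) ^ 2 / m.width j

/-- Membership of the interior part in the broken Sobolev space `H¹(ω)`. -/
def MemM {N : ℕ} (m : Mesh N) (v0 : Fin N → ℝ → ℝ) : Prop :=
  ∀ j, DifferentiableOn ℝ (v0 j) (Set.Icc (m.xl j) (m.xr j))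

/-- `(up0, upb)`, with weak derivatives `Du = D_{p-1} u_p` and `Dcu = D_p^c u_p`, is a
weak Galerkin solution of degree `p` on the mesh `m`. -/
def IsWGsol {N : ℕ} (m : Mesh N) (ε₁ ε₂ : ℝ) (bb rr ff : ℝ → ℝ) (p : ℕ)
    (up0 : Fin N → ℝ → ℝ) (upb : Fin (N + 1) → ℝ) (Du Dcu : Fin N → ℝ → ℝ) : Prop :=
  (∀ j, IsPolyDeg (up0 j) p) ∧ upb 0 = 0 ∧ upb (Fin.last N) = 0 ∧
    IsWeakDeriv m (p - 1) up0 upb Du ∧ IsWeakConvDeriv m bb p up0 upb Dcu ∧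
    ∀ (w0 : Fin N → ℝ → ℝ) (wb : Fin (N + 1) → ℝ),
      (∀ j, IsPolyDeg (w0 j) p) → wb 0 = 0 → wb (Fin.last N) = 0 →
      ∀ Dw : Fin N → ℝ → ℝ, IsWeakDeriv m (p - 1) w0 wb Dw →
        Aform m ε₁ ε₂ bb rr (stdPen m ε₁ p) up0 upb Du Dcu w0 wb Dw
          = ∑ j : Fin N, ∫ t in (m.xl j)..(m.xr j), ff t * w0 j t

/-- Broken `L²` norm over the mesh of a cellwise-given function. -/
def brokenL2 {N : ℕ} (m : Mesh N) (f : Fin N → ℝ → ℝ) : ℝ :=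
  Real.sqrt (∑ j : Fin N, ∫ t in (m.xl j)..(m.xr j), (f j t) ^ 2)

/-- `L²(a,b)` norm. -/
def intL2 (a b : ℝ) (f : ℝ → ℝ) : ℝ := Real.sqrt (∫ t in a..b, (f t) ^ 2)

/-- Analyticity of the data: `‖g⁽ⁿ⁾‖_{∞,[0,1]} ≲ n! γ_g^n`. -/
def AnalyticData (g : ℝ → ℝ) : Prop :=
  ContDiff ℝ (⊤ : ℕ∞) g ∧ ∃ C γg : ℝ, 0 < C ∧ 0 < γg ∧
    ∀ n : ℕ, ∀ x ∈ Set.Icc (0 : ℝ) 1, |iteratedDeriv n g x| ≤ C * n.factorial * γg ^ n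

/-- The characteristic values `μ₀` (`sgn = -1`) and `μ₁` (`sgn = 1`). -/
def muVal (sgn ε₁ ε₂ : ℝ) (bb rr : ℝ → ℝ) : ℝ :=
  sInf ((fun x => (sgn * ε₂ * bb x + Real.sqrt (ε₂ ^ 2 * (bb x) ^ 2 + 4 * ε₁ * rr x))
      / (2 * ε₁)) '' Set.Icc 0 1)

def mu0 (ε₁ ε₂ : ℝ) (bb rr : ℝ → ℝ) : ℝ := muVal (-1) ε₁ ε₂ bb rr

def mu1 (ε₁ ε₂ : ℝ) (bb rr : ℝ → ℝ) : ℝ := muVal 1 ε₁ ε₂ bb rr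

/-- The Spectral Boundary Layer mesh in the reaction-convection-diffusion regime. -/
def IsSBLmeshRCD {N : ℕ} (κ : ℝ) (p : ℕ) (ε₁ ε₂ : ℝ) (bb rr : ℝ → ℝ) (m : Mesh N) : Prop :=
  ((1 : ℝ) / 2 ≤ κ * p * ε₁ ∧ N = 1) ∨
    (κ * p * ε₂ < 1 / 2 ∧ N = 3 ∧
      m.pt 1 = κ * p / mu0 ε₁ ε₂ bb rr ∧ m.pt 2 = 1 - κ * p / mu1 ε₁ ε₂ bb rr)

/-- The Spectral Boundary Layer mesh in the reaction-diffusion regime. -/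
def IsSBLmeshRD {N : ℕ} (κ : ℝ) (p : ℕ) (ε₁ : ℝ) (m : Mesh N) : Prop :=
  ((1 : ℝ) / 2 ≤ κ * p * ε₁ ∧ N = 1) ∨
    (κ * p * ε₁ < 1 / 2 ∧ N = 3 ∧
      m.pt 1 = κ * p * Real.sqrt ε₁ ∧ m.pt 2 = 1 - κ * p * Real.sqrt ε₁)

/-- The Spectral Boundary Layer mesh in the convection-diffusion regime. -/
def IsSBLmeshCD {N : ℕ} (κ : ℝ) (p : ℕ) (ε₁ : ℝ) (m : Mesh N) : Prop :=
  ((1 : ℝ) / 2 ≤ κ * p * ε₁ ∧ N = 1) ∨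
    (κ * p * ε₁ ≤ 1 / 2 ∧ N = 2 ∧ m.pt 1 = 1 - κ * p * ε₁)

/-- The slope of `log Γ` on `[t, t + 1]` is `log t`, hence bounds its derivative at `t + 1`. -/
theorem log_le_deriv_log_Gamma_add_one {t : ℝ} (ht : 0 < t) :
    Real.log t ≤ deriv (fun x => Real.log (Real.Gamma x)) (t + 1) := by
  have hd : DifferentiableAt ℝ (fun x => Real.log (Real.Gamma x)) (t + 1) :=
    (Real.differentiableAt_Gamma fun m => by
      have : (0 : ℝ) ≤ m := m.cast_nonneg
      linarith).log (Real.Gamma_pos_of_pos (by linarith)).ne'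
  have h := Real.convexOn_log_Gamma.slope_le_deriv (Set.mem_Ioi.2 ht) (y := t + 1)
    (Set.mem_Ioi.2 (by linarith)) (by linarith) hd
  rw [slope_def_field] at h
  simp only [Function.comp_apply, add_sub_cancel_left, div_one] at h
  rw [Real.Gamma_add_one ht.ne',
    Real.log_mul ht.ne' (Real.Gamma_pos_of_pos ht).ne', add_sub_cancel_right] at h
  exact h

/-- The logarithm of `Γ(t+1) / (t/e)^t` is increasing on the positive half-line. -/
theorem monotoneOn_log_Gamma_sub_stirling :
    MonotoneOn (fun t => Real.log (Real.Gamma (t + 1)) - (t * Real.log t - t)) (Set.Ioi 0) := by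
  have key : ∀ t : ℝ, 0 < t →
      HasDerivAt (fun t => Real.log (Real.Gamma (t + 1)) - (t * Real.log t - t))
        (deriv (fun x => Real.log (Real.Gamma x)) (t + 1) - Real.log t) t := by
    intro t ht
    have hd : DifferentiableAt ℝ (fun x => Real.log (Real.Gamma x)) (t + 1) :=
      (Real.differentiableAt_Gamma fun m => by
        have : (0 : ℝ) ≤ m := m.cast_nonneg
        linarith).log (Real.Gamma_pos_of_pos (by linarith)).ne'
    have h := (hd.hasDerivAt.comp_add_const t 1).sub
      ((Real.hasDerivAt_mul_log ht.ne').sub (hasDerivAt_id t))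
    rw [add_sub_cancel_right] at h
    exact h
  refine monotoneOn_of_deriv_nonneg (convex_Ioi 0)
    (fun t ht => (key t ht).continuousAt.continuousWithinAt) ?_ ?_
  · rw [interior_Ioi]
    exact fun t ht => (key t ht).differentiableAt.differentiableWithinAt
  · rw [interior_Ioi]
    intro t ht
    rw [(key t ht).deriv]
    exact sub_nonneg.2 (log_le_deriv_log_Gamma_add_one ht)

theorem Gamma_div_Gamma_le_exp {x y : ℝ} (hx : 0 < x) (hxy : x ≤ y) :
    Real.Gamma (x + 1) / Real.Gamma (y + 1)
      ≤ Real.exp (x * Real.log x - x - (y * Real.log y - y)) := by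
  have hy : 0 < y := hx.trans_le hxy
  have hΓx : 0 < Real.Gamma (x + 1) := Real.Gamma_pos_of_pos (by linarith)
  have hΓy : 0 < Real.Gamma (y + 1) := Real.Gamma_pos_of_pos (by linarith)
  rw [← Real.log_le_iff_le_exp (div_pos hΓx hΓy), Real.log_div hΓx.ne' hΓy.ne']
  have h := monotoneOn_log_Gamma_sub_stirling (Set.mem_Ioi.2 hx) (Set.mem_Ioi.2 hy) hxy
  simp only at h
  linarith

theorem geometric_rate_mem_Ioo {lam A : ℝ} (hlam : lam ∈ Set.Ioo (0 : ℝ) 1)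
    (hA : 0 < A) (hA1 : A ≤ 1) :
    (1 - lam) ^ (1 - lam) / (1 + lam) ^ (1 + lam) * A ^ (2 * lam) ∈ Set.Ioo (0 : ℝ) 1 := by
  obtain ⟨h0, h1⟩ := hlam
  have ha : 0 < (1 - lam) ^ (1 - lam) := Real.rpow_pos_of_pos (by linarith) _
  have hb : 1 < (1 + lam) ^ (1 + lam) := Real.one_lt_rpow (by linarith) (by linarith)
  have ha1 : (1 - lam) ^ (1 - lam) < 1 :=
    Real.rpow_lt_one (by linarith) (by linarith) (by linarith)
  have hApos : 0 < A ^ (2 * lam) := Real.rpow_pos_of_pos hA _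
  have hA2 : A ^ (2 * lam) ≤ 1 := Real.rpow_le_one hA.le hA1 (by linarith)
  refine ⟨by positivity, ?_⟩
  have hq : (1 - lam) ^ (1 - lam) / (1 + lam) ^ (1 + lam) < 1 := by
    rw [div_lt_one (by linarith)]
    linarith
  exact (mul_le_of_le_one_right (by positivity) hA2).trans_lt hq

theorem Gamma_ratio_mul_rpow_le {lam K κ : ℝ} (hlam : lam ∈ Set.Ioo (0 : ℝ) 1)
    (hK : 0 < K) (hκ : 0 < κ) {p : ℕ} (hp : 1 ≤ p) :
    Real.Gamma ((p : ℝ) + 1 - lam * ((p : ℝ) + 1) + 1)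
        / Real.Gamma ((p : ℝ) + 1 + lam * ((p : ℝ) + 1) + 1)
        * (K * (2 * κ * p)) ^ (2 * (lam * ((p : ℝ) + 1)))
      ≤ ((1 - lam) ^ (1 - lam) / (1 + lam) ^ (1 + lam)
          * (2 * κ * K * Real.exp 1) ^ (2 * lam)) ^ (p + 1 : ℕ) := by
  obtain ⟨h0, h1⟩ := hlam
  have hp0 : (0 : ℝ) < p := by exact_mod_cast hp
  have hn : (0 : ℝ) < (p : ℝ) + 1 := by linarith
  have ha : 0 < 1 - lam := by linarith
  have hb : 0 < 1 + lam := by linarith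
  have hx : (p : ℝ) + 1 - lam * ((p : ℝ) + 1) = (1 - lam) * (p + 1) := by ring
  have hy : (p : ℝ) + 1 + lam * ((p : ℝ) + 1) = (1 + lam) * (p + 1) := by ring
  have hΓ := Gamma_div_Gamma_le_exp (x := (1 - lam) * (p + 1)) (y := (1 + lam) * (p + 1))
    (by positivity) (by gcongr; linarith)
  have hKκ : 0 < 2 * κ * K := by positivity
  have hpow : 0 ≤ (K * (2 * κ * p)) ^ (2 * (lam * ((p : ℝ) + 1))) := by positivity
  rw [hx, hy]
  refine (mul_le_mul_of_nonneg_right hΓ hpow).trans ?_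
  have hlogp : Real.log p ≤ Real.log (p + 1) := Real.log_le_log hp0 (by linarith)
  rw [show K * (2 * κ * p) = 2 * κ * K * p by ring, Real.rpow_def_of_pos (mul_pos hKκ hp0),
    Real.rpow_def_of_pos ha, Real.rpow_def_of_pos hb,
    Real.rpow_def_of_pos (mul_pos hKκ (Real.exp_pos 1)), ← Real.exp_sub, ← Real.exp_add,
    ← Real.exp_add, ← Real.exp_nat_mul, Real.exp_le_exp, Real.log_mul hKκ.ne' hp0.ne',
    Real.log_mul hKκ.ne' (Real.exp_pos 1).ne', Real.log_exp, Real.log_mul ha.ne' hn.ne',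
    Real.log_mul hb.ne' hn.ne']
  push_cast
  have := mul_le_mul_of_nonneg_left hlogp (by positivity : 0 ≤ 2 * (lam * ((p : ℝ) + 1)))
  linarith

/-- The quantitative Case-1 estimate: with `λ ∈ (0,1)`, `K, κ > 0`,
`2κKe ≤ 1` and `q = ((1−λ)^{1−λ}/(1+λ)^{1+λ})(2κKe)^{2λ}`, one has `q ∈ (0,1)`;
with `s = λ(p+1)` (factorials read via the Gamma function),
`(p+1−s)!/(p+1+s)! · (K·2κp)^{2s} ≤ C q^{p+1}`; and consequently, whenever
`|u'|²_{s,I} ≤ C₁ K^{2s+1} M^{2s+1}` with `M ≤ 2κp`, it follows that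
`(1/(2p+1)) (p+1−s)!/(p+1+s)! |u'|²_{s,I} ≤ C' e^{−βp}` with `β = |ln q|`. -/
theorem statement13 (lam K κ : ℝ) (hlam : lam ∈ Set.Ioo (0 : ℝ) 1)
    (hK : 0 < K) (hκ : 0 < κ) (hsmall : 2 * κ * K * Real.exp 1 ≤ 1) :
    ((1 - lam) ^ (1 - lam) / (1 + lam) ^ (1 + lam) * (2 * κ * K * Real.exp 1) ^ (2 * lam)
        ∈ Set.Ioo (0 : ℝ) 1) ∧
      (∃ C : ℝ, 0 < C ∧ ∀ p : ℕ, 1 ≤ p →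
        Real.Gamma ((p : ℝ) + 1 - lam * ((p : ℝ) + 1) + 1)
            / Real.Gamma ((p : ℝ) + 1 + lam * ((p : ℝ) + 1) + 1)
            * (K * (2 * κ * p)) ^ (2 * (lam * ((p : ℝ) + 1)))
          ≤ C * ((1 - lam) ^ (1 - lam) / (1 + lam) ^ (1 + lam)
              * (2 * κ * K * Real.exp 1) ^ (2 * lam)) ^ (p + 1 : ℕ)) ∧
      (∀ C₁ : ℝ, 0 < C₁ → ∃ C' : ℝ, 0 < C' ∧ ∀ p : ℕ, 1 ≤ p → ∀ M J : ℝ,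
        0 < M → M ≤ 2 * κ * p → 0 ≤ J →
        J ≤ C₁ * K ^ (2 * (lam * ((p : ℝ) + 1)) + 1) * M ^ (2 * (lam * ((p : ℝ) + 1)) + 1) →
        1 / (2 * (p : ℝ) + 1)
            * (Real.Gamma ((p : ℝ) + 1 - lam * ((p : ℝ) + 1) + 1)
              / Real.Gamma ((p : ℝ) + 1 + lam * ((p : ℝ) + 1) + 1)) * J
          ≤ C' * Real.exp (-|Real.log ((1 - lam) ^ (1 - lam) / (1 + lam) ^ (1 + lam)
              * (2 * κ * K * Real.exp 1) ^ (2 * lam))| * p)) := by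
  have hA : 0 < 2 * κ * K * Real.exp 1 := by positivity
  have hq := geometric_rate_mem_Ioo hlam hA hsmall
  have hbound := fun p hp => Gamma_ratio_mul_rpow_le (p := p) hlam hK hκ hp
  set q := (1 - lam) ^ (1 - lam) / (1 + lam) ^ (1 + lam)
    * (2 * κ * K * Real.exp 1) ^ (2 * lam)
  refine ⟨hq, ⟨1, one_pos, fun p hp => by rw [one_mul]; exact hbound p hp⟩, ?_⟩
  intro C₁ hC₁
  refine ⟨C₁, hC₁, fun p hp M J hM hMp _ hJ => ?_⟩
  have hlam0 := hlam.1
  have hp0 : (0 : ℝ) < p := by exact_mod_cast hp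
  have hs : 0 < lam * ((p : ℝ) + 1) := by positivity
  have hx : 0 < (p : ℝ) + 1 - lam * ((p : ℝ) + 1) := by nlinarith [hlam.2]
  have hG : 0 < Real.Gamma ((p : ℝ) + 1 - lam * ((p : ℝ) + 1) + 1)
      / Real.Gamma ((p : ℝ) + 1 + lam * ((p : ℝ) + 1) + 1) :=
    div_pos (Real.Gamma_pos_of_pos (by linarith)) (Real.Gamma_pos_of_pos (by linarith))
  have hG_bound := hbound p hp
  set G := Real.Gamma ((p : ℝ) + 1 - lam * ((p : ℝ) + 1) + 1)
      / Real.Gamma ((p : ℝ) + 1 + lam * ((p : ℝ) + 1) + 1)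
  set s := lam * ((p : ℝ) + 1)
  have hexp : q ^ p = Real.exp (-|Real.log q| * p) := by
    rw [abs_of_neg (Real.log_neg hq.1 hq.2), neg_neg, mul_comm, Real.exp_nat_mul,
      Real.exp_log hq.1]
  have hbase : 0 < K * (2 * κ * p) := by positivity
  have hbase_le : K * (2 * κ * p) ≤ 2 * (p : ℝ) + 1 := by
    have h1 : 2 * κ * K ≤ 1 :=
      (le_mul_of_one_le_right (by positivity) (Real.one_le_exp zero_le_one)).trans hsmall
    nlinarith
  have hJ_le : J ≤ C₁ * ((K * (2 * κ * p)) ^ (2 * s) * (K * (2 * κ * p))) := by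
    refine hJ.trans ?_
    rw [mul_assoc, ← Real.mul_rpow hK.le hM.le, ← Real.rpow_add_one hbase.ne']
    gcongr
  rw [← hexp]
  calc 1 / (2 * (p : ℝ) + 1) * G * J
      ≤ 1 / (2 * (p : ℝ) + 1) * G
          * (C₁ * ((K * (2 * κ * p)) ^ (2 * s) * (K * (2 * κ * p)))) := by gcongr
    _ = C₁ * (K * (2 * κ * p) / (2 * (p : ℝ) + 1)) * (G * (K * (2 * κ * p)) ^ (2 * s)) := by
        ring
    _ ≤ C₁ * 1 * q ^ (p + 1) := by
        gcongr
        exact (div_le_one (by positivity)).2 hbase_le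
    _ ≤ C₁ * q ^ p := by
        rw [mul_one]
        exact mul_le_mul_of_nonneg_left
          (pow_le_pow_of_le_one hq.1.le hq.2.le (Nat.le_succ p)) hC₁.le
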